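/- (Monotone convergence / Fatou property of the mixed-norm Herz norm.) Let n ∈ ℕ, p⃗, q⃗ ∈ (0,∞]^n and α⃗ ∈ ℝⁿ. If f and {f_m}_{m∈ℕ} are measurable functions on ℝⁿ with 0 ≤ f_m ↑ f almost everywhere as m → ∞, then ‖f_m‖_{Ė^{α⃗,p⃗}_{q⃗}(ℝⁿ)} ↑ ‖f‖_{Ė^{α⃗,p⃗}_{q⃗}(ℝⁿ)} as m → ∞. -/

import Mathlib

open MeasureTheory ENNReal Filter

noncomputable section

/-- The dyadic annulus `R_k = (-2^k, 2^k) \ (-2^(k-1), 2^(k-1))` in `ℝ`. -/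
def herzRing (k : ℤ) : Set ℝ :=
  Set.Ioo (-(2 : ℝ) ^ k) ((2 : ℝ) ^ k) \ Set.Ioo (-(2 : ℝ) ^ (k - 1)) ((2 : ℝ) ^ (k - 1))

/-- The `L^q` "norm" (valued in `ℝ≥0∞`) of an `ℝ≥0∞`-valued function on a set `s ⊆ ℝ`,
with the usual modification when `q = ∞`. -/
def lqNormOn (q : ℝ≥0∞) (s : Set ℝ) (g : ℝ → ℝ≥0∞) : ℝ≥0∞ :=
  if q = ∞ then essSup (s.indicator g) volume
  else (∫⁻ x in s, g x ^ q.toReal) ^ (1 / q.toReal)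

/-- The `l^p` norm over `ℤ` of an `ℝ≥0∞`-valued sequence, with the usual modification
when `p = ∞`. -/
def lpZNorm (p : ℝ≥0∞) (a : ℤ → ℝ≥0∞) : ℝ≥0∞ :=
  if p = ∞ then ⨆ k, a k
  else (∑' k : ℤ, a k ^ p.toReal) ^ (1 / p.toReal)

/-- The one-dimensional Herz norm `K^{α,p}_q` of an `ℝ≥0∞`-valued function on `ℝ`. -/
def herzNorm1 (α : ℝ) (p q : ℝ≥0∞) (g : ℝ → ℝ≥0∞) : ℝ≥0∞ :=
  lpZNorm p fun k => ENNReal.ofReal ((2 : ℝ) ^ ((k : ℝ) * α)) * lqNormOn q (herzRing k) g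

/-- The mixed-norm Herz norm on `ℝⁿ` of an `ℝ≥0∞`-valued function: the Herz norm
`K^{α_1,p_1}_{q_1}` is applied in the first variable, then `K^{α_2,p_2}_{q_2}` in the
second variable, …, and finally `K^{α_n,p_n}_{q_n}` in the last variable. -/
def mixedHerzNormE : (n : ℕ) → (Fin n → ℝ) → (Fin n → ℝ≥0∞) → (Fin n → ℝ≥0∞) →
    ((Fin n → ℝ) → ℝ≥0∞) → ℝ≥0∞
  | 0, _, _, _, f => f fun i => i.elim0
  | n + 1, α, p, q, f =>
    herzNorm1 (α (Fin.last n)) (p (Fin.last n)) (q (Fin.last n)) fun xlast =>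
      mixedHerzNormE n (Fin.init α) (Fin.init p) (Fin.init q) fun y => f (Fin.snoc y xlast)

/-- The mixed-norm Herz norm `‖f‖_{Ė^{α,p}_q(ℝⁿ)}` of a complex-valued function on `ℝⁿ`. -/
def herzNormC (n : ℕ) (α : Fin n → ℝ) (p q : Fin n → ℝ≥0∞) (f : (Fin n → ℝ) → ℂ) : ℝ≥0∞ :=
  mixedHerzNormE n α p q fun x => (‖f x‖₊ : ℝ≥0∞)

/-- `I_m = (-2^m, -2^{-m}] ∪ [2^{-m}, 2^m)`. -/
def herzI (m : ℕ) : Set ℝ :=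
  Set.Ioc (-(2 : ℝ) ^ (m : ℤ)) (-(2 : ℝ) ^ (-(m : ℤ))) ∪
    Set.Ico ((2 : ℝ) ^ (-(m : ℤ))) ((2 : ℝ) ^ (m : ℤ))

/-- `A_m = I_m^n ⊆ ℝⁿ`. -/
def herzA (n m : ℕ) : Set (Fin n → ℝ) := Set.univ.pi fun _ => herzI m

/-- The class `H(ℝⁿ)` of simple functions built from finitely many pairwise disjoint
parallelepipeds contained in some `A_m`. -/
def IsHSimple (n : ℕ) (f : (Fin n → ℝ) → ℂ) : Prop :=
  ∃ (m N : ℕ) (a : Fin N → ℂ) (E : Fin N → Fin n → Set ℝ),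
    (∀ k i, MeasurableSet (E k i)) ∧
    (∀ k, Set.univ.pi (E k) ⊆ herzA n m) ∧
    (Pairwise fun k l => Disjoint (Set.univ.pi (E k)) (Set.univ.pi (E l))) ∧
    f = fun x => ∑ k, (Set.univ.pi (E k)).indicator (fun _ => a k) x

/-- The Euclidean ball `B(x,r)` in `ℝⁿ`. -/
def eucBall (n : ℕ) (x : Fin n → ℝ) (r : ℝ) : Set (Fin n → ℝ) :=
  {y | ∑ i, (y i - x i) ^ 2 < r ^ 2}

/-- The (uncentered) maximal operator in the `k`-th variable. -/
def maxVar (n : ℕ) (k : Fin n) (g : (Fin n → ℝ) → ℝ≥0∞) : (Fin n → ℝ) → ℝ≥0∞ :=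
  fun x => ⨆ (a : ℝ) (b : ℝ) (_ : x k ∈ Set.Ioo a b),
    (volume (Set.Ioo a b))⁻¹ * ∫⁻ y in Set.Ioo a b, g (Function.update x k y)

/-- The centered Hardy–Littlewood maximal operator on `ℝⁿ`. -/
def centeredMax (n : ℕ) (g : (Fin n → ℝ) → ℝ≥0∞) : (Fin n → ℝ) → ℝ≥0∞ :=
  fun x => ⨆ (r : ℝ) (_ : 0 < r),
    (volume (eucBall n x r))⁻¹ * ∫⁻ y in eucBall n x r, g y

/-- The composition `M_n ∘ ⋯ ∘ M_1` of the maximal operators in each variable. -/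
def iteratedMax (n : ℕ) (g : (Fin n → ℝ) → ℝ≥0∞) : (Fin n → ℝ) → ℝ≥0∞ :=
  (List.ofFn fun k : Fin n => maxVar n k).foldl (fun h F => F h) g

/-- The iterated maximal operator `ℳ_t(f) = [M_n ⋯ M_1(|f|^t)]^{1/t}`. -/
def iterMaxPow (n : ℕ) (t : ℝ) (f : (Fin n → ℝ) → ℂ) : (Fin n → ℝ) → ℝ≥0∞ :=
  fun x => iteratedMax n (fun y => (‖f y‖₊ : ℝ≥0∞) ^ t) x ^ (1 / t)

/-- The `l^r`-Herz type mixed norm of a sequence of functions on `ℝⁿ`. -/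
def herzSeqNorm (n : ℕ) (r : ℝ≥0∞) (α : Fin n → ℝ) (p q : Fin n → ℝ≥0∞)
    (F : ℤ → (Fin n → ℝ) → ℂ) : ℝ≥0∞ :=
  mixedHerzNormE n α p q fun x => lpZNorm r fun j => (‖F j x‖₊ : ℝ≥0∞)

/-- `N` is a ball quasi-Banach function norm on (nonnegative extended-real-valued)
measurable functions on `ℝⁿ`. -/
def IsBQBFNorm (n : ℕ) (N : ((Fin n → ℝ) → ℝ≥0∞) → ℝ≥0∞) : Prop :=
  (∀ f : (Fin n → ℝ) → ℝ≥0∞, Measurable f → N f = 0 → f =ᵐ[volume] 0) ∧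
  (∀ f g : (Fin n → ℝ) → ℝ≥0∞, Measurable f → Measurable g →
    (∀ᵐ x ∂volume, g x ≤ f x) → N g ≤ N f) ∧
  (∀ (fm : ℕ → (Fin n → ℝ) → ℝ≥0∞) (f : (Fin n → ℝ) → ℝ≥0∞),
    (∀ m, Measurable (fm m)) → Measurable f →
    (∀ᵐ x ∂volume, Monotone (fun m => fm m x) ∧
      Tendsto (fun m => fm m x) atTop (nhds (f x))) →
    Monotone (fun m => N (fm m)) ∧ Tendsto (fun m => N (fm m)) atTop (nhds (N f))) ∧
  (∀ (x : Fin n → ℝ) (r : ℝ), 0 < r →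
    N ((eucBall n x r).indicator fun _ => (1 : ℝ≥0∞)) ≠ ∞)

/-- `N` is a ball Banach function norm: a ball quasi-Banach function norm that moreover
satisfies the triangle inequality and locally dominates the `L¹` norm. -/
def IsBallBanachNorm (n : ℕ) (N : ((Fin n → ℝ) → ℝ≥0∞) → ℝ≥0∞) : Prop :=
  IsBQBFNorm n N ∧
  (∀ f g : (Fin n → ℝ) → ℝ≥0∞, Measurable f → Measurable g → N (f + g) ≤ N f + N g) ∧
  (∀ (x : Fin n → ℝ) (r : ℝ), 0 < r → ∃ C : ℝ≥0∞, 0 < C ∧ C ≠ ∞ ∧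
    ∀ f : (Fin n → ℝ) → ℝ≥0∞, Measurable f → (∫⁻ y in eucBall n x r, f y) ≤ C * N f)

/-- The associate (Köthe dual) norm of a function norm `N`. -/
def assocNormOf (n : ℕ) (N : ((Fin n → ℝ) → ℝ≥0∞) → ℝ≥0∞)
    (f : (Fin n → ℝ) → ℝ≥0∞) : ℝ≥0∞ :=
  ⨆ (g : (Fin n → ℝ) → ℝ≥0∞) (_ : Measurable g) (_ : N g = 1), ∫⁻ x, f x * g x

/-- The `θ`-convexification of a function norm: `‖f‖_{X^θ} = ‖|f|^θ‖_X^{1/θ}`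
(here stated with `θ` in place of `1/p`, so `X^{1/p}` is `convexPow n (1/p) N`). -/
def convexPow (n : ℕ) (θ : ℝ) (N : ((Fin n → ℝ) → ℝ≥0∞) → ℝ≥0∞)
    (f : (Fin n → ℝ) → ℝ≥0∞) : ℝ≥0∞ :=
  N (fun x => f x ^ θ) ^ (1 / θ)

/-- The associate space norm of the mixed-norm Herz space, for complex-valued functions. -/
def herzAssocNormC (n : ℕ) (α : Fin n → ℝ) (p q : Fin n → ℝ≥0∞)
    (f : (Fin n → ℝ) → ℂ) : ℝ≥0∞ :=
  ⨆ (g : (Fin n → ℝ) → ℂ) (_ : Measurable g) (_ : herzNormC n α p q g = 1),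
    ∫⁻ x, (‖f x * g x‖₊ : ℝ≥0∞)

/-!
For nonzero exponents, a one-dimensional Herz norm is an `L^p` norm over `ℤ` (counting measure) of
weighted `L^q` norms over the dyadic rings (restricted Lebesgue measure). So it is enough to know
that `L^p` norms preserve increasing convergence: for `p < ∞` this is monotone convergence of
integrals, and for `p = ∞` suprema commute. Induction on the dimension then works because, by
Fubini, a.e. convergence on `ℝⁿ⁺¹` restricts to a.e. convergence on almost every slice
`x_{n+1} = t`, and because the inner norms depend measurably on `t`.
-/

/-- Increasing convergence `u i ↑ l` of a family indexed by a preorder. -/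
def IncreasesTo {ι α : Type*} [Preorder ι] [Preorder α] [TopologicalSpace α] (u : ι → α) (l : α) :
    Prop :=
  Monotone u ∧ Tendsto u atTop (nhds l)

namespace IncreasesTo

section Order

variable {ι α β : Type*} [Preorder ι] [TopologicalSpace α] [TopologicalSpace β]

theorem const [Preorder α] (l : α) : IncreasesTo (fun _ : ι => l) l :=
  ⟨monotone_const, tendsto_const_nhds⟩

theorem map [Preorder α] [Preorder β] {u : ι → α} {l : α} {φ : α → β} (h : IncreasesTo u l)
    (hmono : Monotone φ) (hcont : ContinuousAt φ l) : IncreasesTo (fun i => φ (u i)) (φ l) :=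
  ⟨hmono.comp h.1, hcont.tendsto.comp h.2⟩

theorem isLUB [Preorder α] [OrderClosedTopology α] [IsDirectedOrder ι] [Nonempty ι] {u : ι → α}
    {l : α} (h : IncreasesTo u l) : IsLUB (Set.range u) l :=
  isLUB_of_tendsto_atTop h.1 h.2

theorem of_isLUB [Preorder α] [SupConvergenceClass α] {u : ι → α} {l : α} (hmono : Monotone u)
    (hlub : IsLUB (Set.range u) l) : IncreasesTo u l :=
  ⟨hmono, tendsto_atTop_isLUB hmono hlub⟩

end Order

section ENNReal

variable {ι : Type*} [Preorder ι] {u : ι → ℝ≥0∞} {l : ℝ≥0∞}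

theorem rpow {r : ℝ} (hr : 0 ≤ r) (h : IncreasesTo u l) : IncreasesTo (fun i => u i ^ r) (l ^ r) :=
  h.map (ENNReal.monotone_rpow_of_nonneg hr) ENNReal.continuous_rpow_const.continuousAt

theorem const_mul {c : ℝ≥0∞} (hc : c ≠ ∞) (h : IncreasesTo u l) :
    IncreasesTo (fun i => c * u i) (c * l) :=
  h.map (fun _ _ hab => mul_le_mul_right hab c) (ENNReal.continuous_const_mul hc).continuousAt

end ENNReal

section Measure

variable {X : Type*} [MeasurableSpace X] {μ : Measure X}

theorem essSup {ι β : Type*} [Preorder ι] [IsDirectedOrder ι] [Nonempty ι] [Countable ι]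
    [CompleteLinearOrder β] [TopologicalSpace β] [OrderTopology β] [FirstCountableTopology β]
    {g : ι → X → β} {g₀ : X → β} (h : ∀ᵐ x ∂μ, IncreasesTo (fun i => g i x) (g₀ x)) :
    IncreasesTo (fun i => essSup (g i) μ) (essSup g₀ μ) := by
  refine of_isLUB (fun i j hij => essSup_mono_ae (h.mono fun x hx => hx.1 hij)) ⟨?_, ?_⟩
  · rintro _ ⟨i, rfl⟩
    exact essSup_mono_ae (h.mono fun x hx => hx.isLUB.1 (Set.mem_range_self i))
  · intro c hc
    have hbound : ∀ᵐ x ∂μ, ∀ i, g i x ≤ c := ae_all_iff.2 fun i =>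
      (_root_.ae_le_essSup).mono fun x hx => hx.trans (hc (Set.mem_range_self i))
    refine essSup_le_of_ae_le c ?_
    filter_upwards [h, hbound] with x hx hxc
    exact hx.isLUB.2 (Set.forall_mem_range.2 hxc)

variable {g : ℕ → X → ℝ≥0∞} {g₀ : X → ℝ≥0∞}

theorem lintegral (hg : ∀ m, AEMeasurable (g m) μ)
    (h : ∀ᵐ x ∂μ, IncreasesTo (fun m => g m x) (g₀ x)) :
    IncreasesTo (fun m => ∫⁻ x, g m x ∂μ) (∫⁻ x, g₀ x ∂μ) :=
  ⟨fun _ _ hab => lintegral_mono_ae (h.mono fun _ hx => hx.1 hab),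
    lintegral_tendsto_of_tendsto_of_monotone hg (h.mono fun _ hx => hx.1)
      (h.mono fun _ hx => hx.2)⟩

theorem eLpNorm (p : ℝ≥0∞) (hg : ∀ m, AEMeasurable (g m) μ)
    (h : ∀ᵐ x ∂μ, IncreasesTo (fun m => g m x) (g₀ x)) :
    IncreasesTo (fun m => eLpNorm (g m) p μ) (eLpNorm g₀ p μ) := by
  rcases eq_or_ne p 0 with rfl | hp
  · simpa only [eLpNorm_exponent_zero] using const 0
  rcases eq_or_ne p ∞ with rfl | hp_top
  · simpa only [eLpNorm_exponent_top, eLpNormEssSup_eq_essSup_enorm, enorm_eq_self] using essSup h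
  · simp only [eLpNorm_eq_lintegral_rpow_enorm_toReal hp hp_top, enorm_eq_self]
    exact (lintegral (fun m => (hg m).pow_const _) (h.mono fun x hx => hx.rpow toReal_nonneg)).rpow
      (by positivity)

end Measure

end IncreasesTo

section ParametricMeasurability

variable {X Y : Type*} [MeasurableSpace X] [MeasurableSpace Y] {ν : Measure Y} [SFinite ν]

theorem measurable_essSup {β : Type*} [CompleteLinearOrder β] [TopologicalSpace β]
    [OrderTopology β] [SecondCountableTopology β] [MeasurableSpace β] [BorelSpace β]
    {F : X → Y → β} (hF : Measurable (Function.uncurry F)) :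
    Measurable fun x => essSup (F x) ν := by
  refine measurable_of_Iic fun c => ?_
  have essSup_le_iff (x : X) :
      essSup (F x) ν ≤ c ↔ ν (Prod.mk x ⁻¹' (Function.uncurry F ⁻¹' Set.Ioi c)) = 0 := by
    have hnull : (∀ᵐ y ∂ν, F x y ≤ c) ↔
        ν (Prod.mk x ⁻¹' (Function.uncurry F ⁻¹' Set.Ioi c)) = 0 := by
      simp only [ae_iff, not_le]
      rfl
    exact ⟨fun hx => hnull.1 ((_root_.ae_le_essSup).mono fun y hy => hy.trans hx),
      fun hx => essSup_le_of_ae_le c (hnull.2 hx)⟩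
  simp only [Set.preimage, Set.mem_Iic, essSup_le_iff]
  exact measurable_measure_prodMk_left (hF measurableSet_Ioi) (measurableSet_singleton 0)

theorem measurable_eLpNorm {ε : Type*} [TopologicalSpace ε] [ContinuousENorm ε] [MeasurableSpace ε]
    [OpensMeasurableSpace ε] (p : ℝ≥0∞) {F : X → Y → ε} (hF : Measurable (Function.uncurry F)) :
    Measurable fun x => eLpNorm (F x) p ν := by
  rcases eq_or_ne p 0 with rfl | hp
  · simp only [eLpNorm_exponent_zero, measurable_const]
  rcases eq_or_ne p ∞ with rfl | hp_top
  · simp only [eLpNorm_exponent_top, eLpNormEssSup_eq_essSup_enorm]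
    exact measurable_essSup hF.enorm
  · simp only [eLpNorm_eq_lintegral_rpow_enorm_toReal hp hp_top]
    exact (Measurable.lintegral_prod_right (hF.enorm.pow_const _)).pow_const _

end ParametricMeasurability

section HerzNorm

theorem measurableSet_herzRing (k : ℤ) : MeasurableSet (herzRing k) :=
  measurableSet_Ioo.diff measurableSet_Ioo

theorem lqNormOn_eq_eLpNorm {q : ℝ≥0∞} (hq : q ≠ 0) {s : Set ℝ} (hs : MeasurableSet s)
    (g : ℝ → ℝ≥0∞) : lqNormOn q s g = eLpNorm g q (volume.restrict s) := by
  rcases eq_or_ne q ∞ with rfl | hq_top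
  · simp only [lqNormOn, if_true, essSup_indicator_eq_essSup_restrict hs, eLpNorm_exponent_top,
      eLpNormEssSup_eq_essSup_enorm, enorm_eq_self]
  · simp only [lqNormOn, if_neg hq_top, eLpNorm_eq_lintegral_rpow_enorm_toReal hq hq_top,
      enorm_eq_self]

theorem lpZNorm_eq_eLpNorm {p : ℝ≥0∞} (hp : p ≠ 0) (a : ℤ → ℝ≥0∞) :
    lpZNorm p a = eLpNorm a p Measure.count := by
  rcases eq_or_ne p ∞ with rfl | hp_top
  · simp only [lpZNorm, if_true, eLpNorm_exponent_top, eLpNormEssSup_eq_essSup_enorm,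
      enorm_eq_self, essSup_count]
  · simp only [lpZNorm, if_neg hp_top, eLpNorm_eq_lintegral_rpow_enorm_toReal hp hp_top,
      enorm_eq_self, lintegral_count]

variable {p q : ℝ≥0∞}

theorem herzNorm1_eq_eLpNorm (α : ℝ) (hp : p ≠ 0) (hq : q ≠ 0) (g : ℝ → ℝ≥0∞) :
    herzNorm1 α p q g = eLpNorm (fun k : ℤ => ENNReal.ofReal ((2 : ℝ) ^ ((k : ℝ) * α)) *
      eLpNorm g q (volume.restrict (herzRing k))) p Measure.count := by
  simp only [herzNorm1, lpZNorm_eq_eLpNorm hp, lqNormOn_eq_eLpNorm hq (measurableSet_herzRing _)]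

theorem IncreasesTo.herzNorm1 (α : ℝ) (hp : p ≠ 0) (hq : q ≠ 0) {g : ℕ → ℝ → ℝ≥0∞}
    {g₀ : ℝ → ℝ≥0∞} (hg : ∀ m, AEMeasurable (g m))
    (h : ∀ᵐ x, IncreasesTo (fun m => g m x) (g₀ x)) :
    IncreasesTo (fun m => herzNorm1 α p q (g m)) (herzNorm1 α p q g₀) := by
  simp only [herzNorm1_eq_eLpNorm α hp hq]
  refine IncreasesTo.eLpNorm p (fun m => (measurable_of_countable _).aemeasurable)
    (Eventually.of_forall fun k => ?_)
  exact (IncreasesTo.eLpNorm q (fun m => (hg m).restrict) (ae_restrict_of_ae h)).const_mul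
    ofReal_ne_top

theorem measurable_herzNorm1 {X : Type*} [MeasurableSpace X] (α : ℝ) (hp : p ≠ 0) (hq : q ≠ 0)
    {F : X → ℝ → ℝ≥0∞} (hF : Measurable (Function.uncurry F)) :
    Measurable fun x => herzNorm1 α p q (F x) := by
  simp only [herzNorm1_eq_eLpNorm α hp hq]
  have weighted_norm_measurable (k : ℤ) : Measurable fun x =>
      ENNReal.ofReal ((2 : ℝ) ^ ((k : ℝ) * α)) *
        eLpNorm (F x) q (volume.restrict (herzRing k)) :=
    (measurable_eLpNorm q hF).const_mul _
  exact measurable_eLpNorm p (measurable_from_prod_countable_left weighted_norm_measurable)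

end HerzNorm

section MixedNorm

variable {n : ℕ}

theorem measurable_finSnoc {X : Type*} [MeasurableSpace X] {A : Fin (n + 1) → Type*}
    [∀ i, MeasurableSpace (A i)] {f : X → ∀ i : Fin n, A i.castSucc} {g : X → A (Fin.last n)}
    (hf : Measurable f) (hg : Measurable g) :
    Measurable fun x => (Fin.snoc (f x) (g x) : ∀ i, A i) := by
  refine measurable_pi_lambda _ (Fin.lastCases ?_ fun i => ?_)
  · simpa only [Fin.snoc_last] using hg
  · simpa only [Fin.snoc_castSucc] using measurable_pi_iff.1 hf i

theorem ae_ae_snoc {E : Type*} [MeasureSpace E] [SigmaFinite (volume : Measure E)]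
    {P : (Fin (n + 1) → E) → Prop} (h : ∀ᵐ x, P x) :
    ∀ᵐ t : E, ∀ᵐ y : Fin n → E, P (Fin.snoc y t) := by
  have hsplit := (volume_preserving_piFinSuccAbove (fun _ : Fin (n + 1) => E) (Fin.last n)).symm
  have hprod := Measure.ae_ae_of_ae_prod (hsplit.quasiMeasurePreserving.ae h)
  simpa [MeasurableEquiv.piFinSuccAbove, Fin.insertNth_last', Fin.snocEquiv] using hprod

theorem measurable_mixedHerzNormE {X : Type*} [MeasurableSpace X] (α : Fin n → ℝ)
    {p q : Fin n → ℝ≥0∞} (hp : ∀ i, p i ≠ 0) (hq : ∀ i, q i ≠ 0) {F : X → (Fin n → ℝ) → ℝ≥0∞}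
    (hF : Measurable (Function.uncurry F)) : Measurable fun x => mixedHerzNormE n α p q (F x) := by
  induction n generalizing X with
  | zero => exact hF.of_uncurry_right
  | succ n ih =>
    have hslice : Measurable (Function.uncurry fun (z : X × ℝ) (y : Fin n → ℝ) =>
        F z.1 (Fin.snoc y z.2)) :=
      hF.comp (measurable_fst.fst.prodMk (measurable_finSnoc measurable_snd measurable_fst.snd))
    exact measurable_herzNorm1 _ (hp _) (hq _) (ih _ (fun i => hp _) (fun i => hq _) hslice)

end MixedNorm

/-- the Fatou (monotone convergence) property of the mixed-norm
Herz norm. -/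
theorem mixedHerz_monotone_convergence (n : ℕ) (p q : Fin n → ℝ≥0∞) (α : Fin n → ℝ)
    (hp : ∀ i, 0 < p i) (hq : ∀ i, 0 < q i)
    (f : (Fin n → ℝ) → ℝ≥0∞) (fm : ℕ → (Fin n → ℝ) → ℝ≥0∞)
    (hf : Measurable f) (hfm : ∀ m, Measurable (fm m))
    (h : ∀ᵐ x ∂(volume : Measure (Fin n → ℝ)), Monotone (fun m => fm m x) ∧
      Tendsto (fun m => fm m x) atTop (nhds (f x))) :
    Monotone (fun m => mixedHerzNormE n α p q (fm m)) ∧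
    Tendsto (fun m => mixedHerzNormE n α p q (fm m)) atTop
      (nhds (mixedHerzNormE n α p q f)) := by
  induction n with
  | zero =>
    obtain ⟨x, hx⟩ := h.exists
    rwa [Subsingleton.elim x fun i => i.elim0] at hx
  | succ n ih =>
    have slice_measurable {g : (Fin (n + 1) → ℝ) → ℝ≥0∞} (hg : Measurable g) :
        Measurable (Function.uncurry fun (t : ℝ) (y : Fin n → ℝ) => g (Fin.snoc y t)) :=
      hg.comp (measurable_finSnoc measurable_snd measurable_fst)
    have norm_measurable (m : ℕ) := measurable_mixedHerzNormE (Fin.init α)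
      (fun i => (hp i.castSucc).ne') (fun i => (hq i.castSucc).ne') (slice_measurable (hfm m))
    refine IncreasesTo.herzNorm1 _ (hp _).ne' (hq _).ne' (fun m => (norm_measurable m).aemeasurable)
      ?_
    filter_upwards [ae_ae_snoc h] with t ht
    exact ih _ _ _ (fun i => hp _) (fun i => hq _) _ _ (slice_measurable hf).of_uncurry_left
      (fun m => (slice_measurable (hfm m)).of_uncurry_left) ht
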